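/- Collapse of probabilistic entailment into classical entailment: let Δ be a set of propositional formulas, α a propositional formula, and p, q ∈ (0,1] with p ≥ q. Then Δ ⊨ α (classical entailment) if and only if Δ ⊨_{pq} α (pq-entailment). -/

import Mathlib

open MeasureTheory

/-- Propositional formulas over atoms `B_j`, `j : ℕ`, with `¬` and `→`. -/
inductive PropForm : Type
  | atom : ℕ → PropForm
  | neg : PropForm → PropForm
  | imp : PropForm → PropForm → PropForm
  deriving DecidableEq

namespace PropForm

def conj (α β : PropForm) : PropForm := neg (imp α (neg β))
def disj (α β : PropForm) : PropForm := imp (neg α) β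
def biimp (α β : PropForm) : PropForm := conj (imp α β) (imp β α)
def top : PropForm := imp (atom 0) (atom 0)
def bot : PropForm := neg top

/-- Satisfaction of a formula by a valuation `v : ℕ → Bool` (a subset of ℕ). -/
def sat (v : ℕ → Bool) : PropForm → Prop
  | atom j => v j = true
  | neg α => ¬ sat v α
  | imp α β => sat v α → sat v β

/-- The finite set `B_α` of indices of atoms occurring in `α`. -/
def atoms : PropForm → Finset ℕ
  | atom j => {j}
  | neg α => atoms α
  | imp α β => atoms α ∪ atoms β

end PropForm

/-- `⊨ α`: every valuation satisfies `α`. -/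
def Valid (α : PropForm) : Prop := ∀ v, PropForm.sat v α

/-- `α ⊨ β`. -/
def Entails (α β : PropForm) : Prop := ∀ v, PropForm.sat v α → PropForm.sat v β

/-- `Δ ⊨ α`. -/
def SetEntails (Δ : Set PropForm) (α : PropForm) : Prop :=
  ∀ v, (∀ δ ∈ Δ, PropForm.sat v δ) → PropForm.sat v α

/-- Conjunction of a list of formulas (empty conjunction is `⊤`). -/
def bigConj (l : List PropForm) : PropForm := l.foldr PropForm.conj PropForm.top

/-- Disjunction of a list of formulas (empty disjunction is `⊥`). -/
def bigDisj (l : List PropForm) : PropForm := l.foldr PropForm.disj PropForm.bot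

/-- `φ_A^U = (⋀_{j∈U} B_j) ∧ (⋀_{j∈A∖U} ¬B_j)`. -/
def phi (A U : Finset ℕ) : PropForm :=
  PropForm.conj (bigConj ((U.sort (· ≤ ·)).map PropForm.atom))
    (bigConj (((A \ U).sort (· ≤ ·)).map (fun j => PropForm.neg (PropForm.atom j))))

/-- The space of valuations, `2^ℕ` identified with `{0,1}^ℕ`, with the product σ-algebra. -/
abbrev Val := ℕ → Bool

/-- `v ∩ A` for a valuation `v` and a finite `A ⊆ ℕ`. -/
def restrict (v : Val) (A : Finset ℕ) : Finset ℕ := A.filter (fun j => v j = true)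

/-- `Prob_μ(α) = μ{v : v ⊨ α}`. -/
noncomputable def Prob (μ : Measure Val) (α : PropForm) : ℝ :=
  (μ {v | PropForm.sat v α}).toReal

/-- `Δ ⊨_{pq} α`: there is a finite `Φ ⊆ Δ` such that every stochastic valuation giving
probability at least `p` to `⋀Φ` gives probability at least `q` to `α` (`⋀∅ = ⊤`). -/
def pqEntails (Δ : Set PropForm) (α : PropForm) (p q : ℝ) : Prop :=
  ∃ Φ : Finset PropForm, ↑Φ ⊆ Δ ∧
    ∀ μ : MeasureTheory.Measure Val, IsProbabilityMeasure μ →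
      p ≤ Prob μ (bigConj Φ.toList) → q ≤ Prob μ α

/-! For finite `Φ`, classical and probabilistic entailment from `⋀Φ` coincide: monotonicity of
measures gives one direction, and the Dirac measure at a countermodel gives the other. Since
`pq`-entailment is finitary by definition, the theorem reduces to compactness of propositional
logic, which is compactness of the space of valuations because every formula defines a clopen set.
-/

namespace PropForm

theorem sat_conj {v : Val} {α β : PropForm} : sat v (conj α β) ↔ sat v α ∧ sat v β := by
  simp [conj, sat]

theorem sat_bigConj {v : Val} {l : List PropForm} : sat v (bigConj l) ↔ ∀ δ ∈ l, sat v δ := by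
  induction l with
  | nil => simp [bigConj, top, sat]
  | cons δ l ih => exact sat_conj.trans (by rw [List.forall_mem_cons, ← ih, bigConj])

theorem isClopen_sat (α : PropForm) : IsClopen {v : Val | sat v α} := by
  induction α with
  | atom j => exact (isClopen_discrete {true}).preimage (continuous_apply (A := fun _ => Bool) j)
  | neg α ihα => exact ihα.compl
  | imp α β ihα ihβ => exact ihα.himp ihβ

end PropForm

theorem SetEntails.mono {Γ Δ : Set PropForm} {α : PropForm} (h : SetEntails Γ α) (hΓΔ : Γ ⊆ Δ) :
    SetEntails Δ α :=
  fun v hv => h v fun δ hδ => hv δ (hΓΔ hδ)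

theorem SetEntails.exists_finset_subset {Δ : Set PropForm} {α : PropForm} (h : SetEntails Δ α) :
    ∃ Φ : Finset PropForm, ↑Φ ⊆ Δ ∧ SetEntails ↑Φ α := by
  have hcompact : IsCompact {v : Val | ¬ α.sat v} :=
    α.isClopen_sat.compl.isClosed.isCompact
  have hopen (δ : PropForm) : IsOpen {v : Val | ¬ δ.sat v} := δ.isClopen_sat.compl.isOpen
  have hcover : {v : Val | ¬ α.sat v} ⊆ ⋃ δ ∈ Δ, {v | ¬ δ.sat v} := fun v hα => by
    simpa using mt (h v) hα
  obtain ⟨Φ, hΦΔ, hΦ, hΦcover⟩ :=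
    hcompact.elim_finite_subcover_image (fun δ _ => hopen δ) hcover
  lift Φ to Finset PropForm using hΦ
  refine ⟨Φ, hΦΔ, fun v hv => ?_⟩
  by_contra hα
  obtain ⟨δ, hδ, hδv⟩ := Set.mem_iUnion₂.1 (hΦcover hα)
  exact hδv (hv δ hδ)

theorem setEntails_iff_exists_finset_subset {Δ : Set PropForm} {α : PropForm} :
    SetEntails Δ α ↔ ∃ Φ : Finset PropForm, ↑Φ ⊆ Δ ∧ SetEntails ↑Φ α :=
  ⟨SetEntails.exists_finset_subset, fun ⟨_, hΦΔ, hΦ⟩ => hΦ.mono hΦΔ⟩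

theorem entails_bigConj_iff {l : List PropForm} {α : PropForm} :
    Entails (bigConj l) α ↔ SetEntails {δ | δ ∈ l} α :=
  forall_congr' fun _ => imp_congr_left PropForm.sat_bigConj

theorem Entails.prob_le_prob {α β : PropForm} (h : Entails α β) (μ : Measure Val)
    [IsFiniteMeasure μ] : Prob μ α ≤ Prob μ β :=
  measureReal_mono h

theorem prob_dirac_of_sat {v : Val} {α : PropForm} (h : α.sat v) :
    Prob (Measure.dirac v) α = 1 := by
  simp [Prob, Measure.dirac_apply_of_mem (show v ∈ {v | α.sat v} from h)]

theorem prob_dirac_of_not_sat {v : Val} {α : PropForm} (h : ¬ α.sat v) :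
    Prob (Measure.dirac v) α = 0 := by
  simp [Prob, Measure.dirac_apply' v α.isClopen_sat.isOpen.measurableSet, h]

theorem entails_iff_forall_le_prob {α β : PropForm} {p q : ℝ} (hp : p ≤ 1) (hq : 0 < q)
    (hqp : q ≤ p) :
    Entails α β ↔
      ∀ μ : Measure Val, IsProbabilityMeasure μ → p ≤ Prob μ α → q ≤ Prob μ β := by
  constructor
  · exact fun h μ _ hα => hqp.trans (hα.trans (h.prob_le_prob μ))
  · intro h v hα
    by_contra hβ
    have hqβ : q ≤ Prob (Measure.dirac v) β :=
      h _ inferInstance (hp.trans_eq (prob_dirac_of_sat hα).symm)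
    exact hq.not_ge (hqβ.trans_eq (prob_dirac_of_not_sat hβ))

/-- collapse of probabilistic entailment into classical entailment:
for `p, q ∈ (0,1]` with `p ≥ q`, `Δ ⊨ α` iff `Δ ⊨_{pq} α`. -/
theorem pq_entailment_collapse (Δ : Set PropForm) (α : PropForm) (p q : ℝ)
    (hp0 : 0 < p) (hp1 : p ≤ 1) (hq0 : 0 < q) (hq1 : q ≤ 1) (hpq : q ≤ p) :
    SetEntails Δ α ↔ pqEntails Δ α p q := by
  have hfinite (Φ : Finset PropForm) : SetEntails ↑Φ α ↔
      ∀ μ : Measure Val, IsProbabilityMeasure μ → p ≤ Prob μ (bigConj Φ.toList) → q ≤ Prob μ α := by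
    rw [← entails_iff_forall_le_prob hp1 hq0 hpq, entails_bigConj_iff]
    simp only [Finset.mem_toList, Finset.setOfPred_mem]
  exact setEntails_iff_exists_finset_subset.trans <|
    exists_congr fun Φ => and_congr_right' (hfinite Φ)
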